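/- A blur shift space Σ_Λ (with the subspace topology inherited from the full blur shift Σ) is compact if and only if V_Λ is a finite family of sets and B_1(Λ) ∖ ⋃_{H ∈ V_Λ} H is finite (i.e., the sets of V_Λ cover all but finitely many elements of B_1(Λ)). -/

import Mathlib

open Set Filter Topology

namespace BlurPaper

/-- The extended alphabet `Ā = A ⊕ V`, where each blurred set `H ∈ V` is regarded
as a new symbol `H̃`. -/
abbrev Symb (A : Type*) (V : Set (Set A)) := A ⊕ {H : Set A // H ∈ V}

/-- `V` is a family of blurred sets: every member is infinite and two distinct members
have finite intersection. -/
def IsBlurFamily {A : Type*} (V : Set (Set A)) : Prop :=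
  (∀ H ∈ V, H.Infinite) ∧ ∀ G ∈ V, ∀ H ∈ V, G ≠ H → (G ∩ H).Finite

/-- The full blur shift `Σ`: sequences over `Ā` such that a blur symbol is followed
by the same blur symbol. -/
def FullBlur (A : Type*) (V : Set (Set A)) : Set (ℕ → Symb A V) :=
  {x | ∀ (i : ℕ) (H : {H : Set A // H ∈ V}), x i = Sum.inr H → x (i + 1) = Sum.inr H}

/-- Generalized cylinder `Z(α)`. -/
def Z (A : Type*) (V : Set (Set A)) (α : List A) : Set (FullBlur A V) :=
  {x | ∀ i : Fin α.length, x.1 i = Sum.inl (α.get i)}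

/-- Generalized cylinder `Z(α, H, F)`. -/
def ZH (A : Type*) (V : Set (Set A)) (α : List A) (H : {H : Set A // H ∈ V})
    (F : Set A) : Set (FullBlur A V) :=
  {x | (∀ i : Fin α.length, x.1 i = Sum.inl (α.get i)) ∧
    (x.1 α.length = Sum.inr H ∨ ∃ a ∈ H.1 \ F, x.1 α.length = Sum.inl a)}

/-- The collection of all generalized cylinders. -/
def Cylinders (A : Type*) (V : Set (Set A)) : Set (Set (FullBlur A V)) :=
  {U | ∃ α : List A, U = Z A V α} ∪
  {U | ∃ (α : List A) (H : {H : Set A // H ∈ V}) (F : Set A),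
    F ⊆ H.1 ∧ F.Finite ∧ U = ZH A V α H F}

/-- The topology on the full blur shift generated by the generalized cylinders. -/
def tau (A : Type*) (V : Set (Set A)) : TopologicalSpace (FullBlur A V) :=
  TopologicalSpace.generateFrom (Cylinders A V)

/-- The shift map on the full blur shift. -/
def shift (A : Type*) (V : Set (Set A)) : FullBlur A V → FullBlur A V :=
  fun x => ⟨fun i => x.1 (i + 1), fun i H h => x.2 (i + 1) H h⟩

/-- The shift map on `A^ℕ`. -/
def shiftSeq (A : Type*) : (ℕ → A) → ℕ → A := fun x i => x (i + 1)

/-- The prodiscrete topology on `A^ℕ` (product of discrete topologies). -/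
def prodDiscrete (A : Type*) : TopologicalSpace (ℕ → A) :=
  @Pi.topologicalSpace ℕ (fun _ => A) fun _ => ⊥

/-- A (classical) shift space over `A`: closed in the prodiscrete topology and
invariant under the shift map. -/
def IsShiftSpace {A : Type*} (Λ : Set (ℕ → A)) : Prop :=
  @IsClosed _ (prodDiscrete A) Λ ∧ ∀ x ∈ Λ, shiftSeq A x ∈ Λ

/-- `w ∈ B(Y)`: the finite word `w` appears as an initial word of some element of `Y`. -/
def InLang {A : Type*} (Y : Set (ℕ → A)) (w : List A) : Prop :=
  ∃ x ∈ Y, ∀ i : Fin w.length, x i = w.get i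

/-- The follower set `F_Y(w) = {a : w a ∈ B(Y)}`. -/
def Fol {A : Type*} (Y : Set (ℕ → A)) (w : List A) : Set A :=
  {a | InLang Y (w ++ [a])}

/-- The predecessor set `P_Y(a) = {b : b a ∈ B(Y)}`. -/
def Pred {A : Type*} (Y : Set (ℕ → A)) (a : A) : Set A :=
  {b | InLang Y [b, a]}

/-- `B₁(Y)`: the set of letters occurring in sequences of `Y`. -/
def letters {A : Type*} (Y : Set (ℕ → A)) : Set A :=
  {a | ∃ x ∈ Y, ∃ i, x i = a}

/-- The canonical embedding `A^ℕ → Σ`. -/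
def embed (A : Type*) (V : Set (Set A)) : (ℕ → A) → FullBlur A V :=
  fun x => ⟨fun i => Sum.inl (x i), fun _ _ h => absurd h (by simp)⟩

/-- The point `(a₀ … a_{n-1} H̃ H̃ H̃ …)` of the full blur shift. -/
def wordBlur {A : Type*} {V : Set (Set A)} (α : List A) (H : {H : Set A // H ∈ V}) :
    FullBlur A V :=
  ⟨fun i => if h : i < α.length then Sum.inl (α.get ⟨i, h⟩) else Sum.inr H, by
    intro i K hK
    by_cases h : i < α.length
    · simp only [dif_pos h] at hK
      exact absurd hK (by simp)
    · simp only [dif_neg h] at hK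
      simp only [dif_neg (by omega : ¬ i + 1 < α.length)]
      exact hK⟩

/-- The boundary `∂Y`: points `(a₀ … a_{n-1} H̃ H̃ …)` with `a₀ … a_{n-1} ∈ B(Y)` and
`F_Y(a₀ … a_{n-1}) ∩ H` infinite. -/
def boundary (A : Type*) (V : Set (Set A)) (Y : Set (ℕ → A)) : Set (FullBlur A V) :=
  {z | ∃ (α : List A) (H : {H : Set A // H ∈ V}),
    z = wordBlur α H ∧ InLang Y α ∧ (Fol Y α ∩ H.1).Infinite}

/-- The blur shift space `Σ_Y = Y ∪ ∂Y` of `Y` with resolution `V`. -/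
def SigmaOf (A : Type*) (V : Set (Set A)) (Y : Set (ℕ → A)) : Set (FullBlur A V) :=
  embed A V '' Y ∪ boundary A V Y

/-- The subspace topology inherited from the full blur shift. -/
def subTau (A : Type*) (V : Set (Set A)) (X : Set (FullBlur A V)) :
    TopologicalSpace X :=
  TopologicalSpace.induced Subtype.val (tau A V)

/-- `V_Λ`: the blurred sets that appear in `Σ_Λ`, i.e. those meeting `B₁(Λ)` in an
infinite set. -/
def VLam (A : Type*) (V : Set (Set A)) (Λ : Set (ℕ → A)) : Set (Set A) :=
  {H | H ∈ V ∧ (letters Λ ∩ H).Infinite}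

/-!
A point of `Σ` is either a sequence of letters or a word followed by a repeated blur symbol, and
the cylinders `Z(α)`, respectively `Z(α, H, F)`, containing it form a neighbourhood base.

If `V_Λ` is finite and covers `B₁(Λ)` up to a finite set, then for every word `α` the part of
`Σ_Λ` in `Z(α)` is covered by finitely many sets `Z(αa)` and `Z(α, H, ∅)`. An ultrafilter
on `Σ_Λ` therefore either chooses one letter after another, and converges to a sequence of letters,
or stops at some `α`, where it chooses an `H` and converges to `αH̃H̃…`. As `Σ_Λ` is closed, the
limit lies in it.

Conversely, for `α` empty these sets form an irredundant open cover of `Σ_Λ`, indexed by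
`B₁(Λ) ∖ ⋃ V_Λ` together with `V_Λ`, so compactness forces both index sets to be finite.
-/

section General

lemma finite_of_isCompact_of_irredundant_cover {X ι : Type*} [TopologicalSpace X] {K : Set X}
    (hK : IsCompact K) {U : ι → Set X} (hU : ∀ i, IsOpen (U i)) (hcover : K ⊆ ⋃ i, U i)
    (hirr : ∀ i, ∃ x ∈ K, ∀ j, x ∈ U j → j = i) : Finite ι := by
  obtain ⟨t, ht⟩ := hK.elim_finite_subcover U hU hcover
  refine Finite.of_finite_univ (t.finite_toSet.subset fun i _ => ?_)
  obtain ⟨x, hxK, hx⟩ := hirr i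
  obtain ⟨j, hjt, hxj⟩ := mem_iUnion₂.1 (ht hxK)
  exact hx j hxj ▸ hjt

lemma exists_seq_forall_map_range {A : Type*} {P : List A → Prop} (nil : P [])
    (snoc : ∀ w, P w → ∃ a, P (w ++ [a])) : ∃ y : ℕ → A, ∀ n, P ((List.range n).map y) := by
  choose next hnext using snoc
  let w : ℕ → {w // P w} := Nat.rec ⟨[], nil⟩ fun _ w => ⟨w.1 ++ [next w.1 w.2], hnext w.1 w.2⟩
  refine ⟨fun n => next (w n).1 (w n).2, fun n => ?_⟩
  have hw : (List.range n).map (fun n => next (w n).1 (w n).2) = (w n).1 := by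
    induction n with
    | zero => rfl
    | succ n ih => rw [List.range_succ, List.map_append, ih]; rfl
  exact hw ▸ (w n).2

end General

section FullBlur

variable {A : Type*} {V : Set (Set A)} {α β : List A} {a : A} {y : ℕ → A}
  {G H : {H : Set A // H ∈ V}} {F : Set A} {x : FullBlur A V}

lemma mem_Z_iff_getElem :
    x ∈ Z A V α ↔ ∀ (i : ℕ) (h : i < α.length), x.1 i = Sum.inl α[i] :=
  Fin.forall_iff

lemma mem_Z_nil (x : FullBlur A V) : x ∈ Z A V [] := fun i => i.elim0

lemma mem_Z_append_singleton_iff :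
    x ∈ Z A V (α ++ [a]) ↔ x ∈ Z A V α ∧ x.1 α.length = Sum.inl a := by
  simp only [mem_Z_iff_getElem, List.length_append, List.length_singleton,
    Nat.forall_lt_succ_right']
  refine and_congr (forall₂_congr fun i hi => ?_) ?_
  · rw [List.getElem_append_left hi]
  · rw [List.getElem_concat_length rfl]

lemma Z_subset_Z_of_prefix (h : β <+: α) : Z A V α ⊆ Z A V β := by
  obtain ⟨_, hget⟩ := List.prefix_iff_getElem.1 h
  intro x hx
  rw [mem_Z_iff_getElem] at hx ⊢
  intro i hi
  rw [hx i (by omega), hget i hi]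

lemma embed_mem_Z_iff : embed A V y ∈ Z A V α ↔ (List.range α.length).map y = α := by
  simp [mem_Z_iff_getElem, embed, List.ext_getElem_iff]

lemma embed_mem_Z_map_range (y : ℕ → A) (n : ℕ) : embed A V y ∈ Z A V ((List.range n).map y) := by
  simp [embed_mem_Z_iff]

lemma eq_embed_of_forall_mem_Z (h : ∀ n, x ∈ Z A V ((List.range n).map y)) :
    x = embed A V y := by
  ext i : 2
  simpa [embed] using mem_Z_iff_getElem.1 (h (i + 1)) i (by simp)

lemma wordBlur_apply_of_lt {i : ℕ} (h : i < α.length) :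
    (wordBlur α H).1 i = Sum.inl α[i] := by
  simp [wordBlur, h]

lemma wordBlur_apply_of_le {i : ℕ} (h : α.length ≤ i) : (wordBlur α H).1 i = Sum.inr H := by
  simp [wordBlur, h]

lemma embed_ne_wordBlur : embed A V y ≠ wordBlur α H := by
  intro h
  have hlen := wordBlur_apply_of_le (H := H) (le_refl α.length)
  simp [← h, embed] at hlen

lemma wordBlur_mem_Z_iff : wordBlur α H ∈ Z A V β ↔ β <+: α := by
  rw [mem_Z_iff_getElem, List.prefix_iff_getElem]
  constructor
  · intro h
    have hlen : β.length ≤ α.length := by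
      by_contra! hlt
      simpa [wordBlur_apply_of_le le_rfl] using h α.length hlt
    refine ⟨hlen, fun i hi => ?_⟩
    have hget := h i hi
    rw [wordBlur_apply_of_lt (hi.trans_le hlen)] at hget
    exact (Sum.inl_injective hget).symm
  · rintro ⟨hlen, hget⟩ i hi
    rw [wordBlur_apply_of_lt (hi.trans_le hlen), hget i hi]

lemma wordBlur_inj : wordBlur α H = wordBlur β G ↔ α = β ∧ H = G := by
  refine ⟨fun h => ?_, fun ⟨hα, hH⟩ => hα ▸ hH ▸ rfl⟩
  have hαβ : α <+: β := wordBlur_mem_Z_iff.1 (h ▸ wordBlur_mem_Z_iff.2 List.prefix_rfl)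
  have hβα : β <+: α := wordBlur_mem_Z_iff.1 (h.symm ▸ wordBlur_mem_Z_iff.2 List.prefix_rfl)
  obtain rfl : α = β := hαβ.eq_of_length_le hβα.length_le
  have hlen := congrArg (fun x => x.1 α.length) h
  simp only [wordBlur_apply_of_le le_rfl] at hlen
  exact ⟨rfl, Sum.inr_injective hlen⟩

lemma apply_eq_inr_of_le {m n : ℕ} (hmn : m ≤ n) (h : x.1 m = Sum.inr H) :
    x.1 n = Sum.inr H :=
  Nat.le_induction h (fun k _ => x.2 k H) n hmn

lemma eq_wordBlur_iff : x = wordBlur α H ↔ x ∈ Z A V α ∧ x.1 α.length = Sum.inr H := by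
  constructor
  · rintro rfl
    exact ⟨wordBlur_mem_Z_iff.2 List.prefix_rfl, wordBlur_apply_of_le le_rfl⟩
  · rintro ⟨hx, hH⟩
    ext i : 2
    rcases lt_or_ge i α.length with hi | hi
    · rw [wordBlur_apply_of_lt hi, mem_Z_iff_getElem.1 hx i hi]
    · rw [wordBlur_apply_of_le hi, apply_eq_inr_of_le hi hH]

lemma exists_mem_Z_append_or_eq_wordBlur (hx : x ∈ Z A V α) :
    (∃ a, x ∈ Z A V (α ++ [a])) ∨ ∃ H, x = wordBlur α H := by
  rcases hsymb : x.1 α.length with a | H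
  · exact Or.inl ⟨a, mem_Z_append_singleton_iff.2 ⟨hx, hsymb⟩⟩
  · exact Or.inr ⟨H, eq_wordBlur_iff.2 ⟨hx, hsymb⟩⟩

lemma exists_eq_embed_or_eq_wordBlur (x : FullBlur A V) :
    (∃ y, x = embed A V y) ∨ ∃ α H, x = wordBlur α H := by
  by_cases hext : ∀ α, x ∈ Z A V α → ∃ a, x ∈ Z A V (α ++ [a])
  · obtain ⟨y, hy⟩ := exists_seq_forall_map_range (mem_Z_nil x) hext
    exact Or.inl ⟨y, eq_embed_of_forall_mem_Z hy⟩
  · push Not at hext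
    obtain ⟨α, hα, hmax⟩ := hext
    exact Or.inr ⟨α, (exists_mem_Z_append_or_eq_wordBlur hα).resolve_left fun ⟨a, ha⟩ => hmax a ha⟩

lemma mem_ZH_iff :
    x ∈ ZH A V α H F ↔ x = wordBlur α H ∨ ∃ a ∈ H.1 \ F, x ∈ Z A V (α ++ [a]) := by
  have hdef : x ∈ ZH A V α H F ↔ x ∈ Z A V α ∧
      (x.1 α.length = Sum.inr H ∨ ∃ a ∈ H.1 \ F, x.1 α.length = Sum.inl a) := Iff.rfl
  simp only [hdef, eq_wordBlur_iff, mem_Z_append_singleton_iff]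
  grind

lemma ZH_empty_subset_union (F : Set A) :
    ZH A V α H ∅ ⊆ ZH A V α H F ∪ ⋃ a ∈ F, Z A V (α ++ [a]) := by
  intro x hx
  rcases mem_ZH_iff.1 hx with rfl | ⟨a, ⟨haH, -⟩, hxa⟩
  · exact Or.inl (mem_ZH_iff.2 (Or.inl rfl))
  · by_cases haF : a ∈ F
    · exact Or.inr (mem_biUnion haF hxa)
    · exact Or.inl (mem_ZH_iff.2 (Or.inr ⟨a, ⟨haH, haF⟩, hxa⟩))

end FullBlur

section Language

variable {A : Type*} {V : Set (Set A)} {Λ : Set (ℕ → A)} {α β : List A} {a : A} {y : ℕ → A}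
  {H : {H : Set A // H ∈ V}} {x : FullBlur A V}

lemma inLang_iff_exists_embed_mem_Z (V : Set (Set A)) :
    InLang Λ α ↔ ∃ y ∈ Λ, embed A V y ∈ Z A V α := by
  simp [InLang, Z, embed]

lemma InLang.of_prefix (hα : InLang Λ α) (h : β <+: α) : InLang Λ β := by
  rw [inLang_iff_exists_embed_mem_Z ∅] at hα ⊢
  exact hα.imp fun y hy => ⟨hy.1, Z_subset_Z_of_prefix h hy.2⟩

lemma fol_subset_letters (Λ : Set (ℕ → A)) (α : List A) : Fol Λ α ⊆ letters Λ := by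
  intro a ha
  obtain ⟨y, hy, hya⟩ := (inLang_iff_exists_embed_mem_Z ∅).1 ha
  exact ⟨y, hy, α.length, Sum.inl_injective (mem_Z_append_singleton_iff.1 hya).2⟩

lemma exists_apply_zero_eq_of_mem_letters (hΛ : MapsTo (shiftSeq A) Λ Λ) (ha : a ∈ letters Λ) :
    ∃ y ∈ Λ, y 0 = a := by
  obtain ⟨y, hy, i, hi⟩ := ha
  induction i generalizing y with
  | zero => exact ⟨y, hy, hi⟩
  | succ i ih => exact ih _ (hΛ hy) hi

lemma fol_nil (hΛ : MapsTo (shiftSeq A) Λ Λ) : Fol Λ [] = letters Λ := by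
  refine (fol_subset_letters Λ []).antisymm fun a ha => ?_
  obtain ⟨y, hy, rfl⟩ := exists_apply_zero_eq_of_mem_letters hΛ ha
  exact (inLang_iff_exists_embed_mem_Z ∅).2 ⟨y, hy, embed_mem_Z_map_range y 1⟩

lemma mem_of_isClosed_of_forall_inLang (hΛ : IsClosed[prodDiscrete A] Λ)
    (h : ∀ n, InLang Λ ((List.range n).map y)) : y ∈ Λ := by
  let _ : TopologicalSpace A := ⊥
  have : DiscreteTopology A := ⟨rfl⟩
  by_contra hy
  obtain ⟨n, hn⟩ := PiNat.exists_disjoint_cylinder (E := fun _ => A) hΛ hy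
  obtain ⟨z, hz, hzy⟩ := h n
  refine disjoint_left.1 hn hz fun i hi => ?_
  simpa using hzy ⟨i, by simpa using hi⟩

lemma wordBlur_mem_sigmaOf_iff :
    wordBlur α H ∈ SigmaOf A V Λ ↔ (Fol Λ α ∩ H.1).Infinite := by
  constructor
  · rintro (⟨y, -, hy⟩ | ⟨β, G, heq, -, hinf⟩)
    · exact absurd hy embed_ne_wordBlur
    · obtain ⟨rfl, rfl⟩ := wordBlur_inj.1 heq
      exact hinf
  · intro hinf
    obtain ⟨a, ha, -⟩ := hinf.nonempty
    exact Or.inr ⟨α, H, rfl, InLang.of_prefix ha (List.prefix_append α [a]), hinf⟩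

lemma inLang_of_mem_sigmaOf (hx : x ∈ SigmaOf A V Λ) (hα : x ∈ Z A V α) : InLang Λ α := by
  rcases hx with ⟨y, hy, rfl⟩ | ⟨β, H, rfl, hβ, -⟩
  · exact (inLang_iff_exists_embed_mem_Z V).2 ⟨y, hy, hα⟩
  · exact hβ.of_prefix (wordBlur_mem_Z_iff.1 hα)

end Language

section Topology

variable {A : Type*} {V : Set (Set A)} {Λ : Set (ℕ → A)} {α : List A} {y : ℕ → A}
  {H : {H : Set A // H ∈ V}} {F : Set A} {f : Filter (FullBlur A V)}
  {𝒰 : Ultrafilter (FullBlur A V)}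

local instance : TopologicalSpace (FullBlur A V) := tau A V

lemma isOpen_Z (α : List A) : IsOpen (Z A V α) :=
  TopologicalSpace.isOpen_generateFrom_of_mem (Or.inl ⟨α, rfl⟩)

lemma isOpen_ZH (hFH : F ⊆ H.1) (hF : F.Finite) : IsOpen (ZH A V α H F) :=
  TopologicalSpace.isOpen_generateFrom_of_mem (Or.inr ⟨α, H, F, hFH, hF, rfl⟩)

lemma le_nhds_embed_iff :
    f ≤ 𝓝 (embed A V y) ↔ ∀ α, embed A V y ∈ Z A V α → Z A V α ∈ f := by
  refine ⟨fun h α hα => h ((isOpen_Z α).mem_nhds hα), fun h => ?_⟩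
  refine TopologicalSpace.tendsto_nhds_generateFrom_iff.2 ?_
  rintro _ (⟨α, rfl⟩ | ⟨α, H, F, -, -, rfl⟩) hy
  · exact h α hy
  · obtain ⟨a, ha, hya⟩ := (mem_ZH_iff.1 hy).resolve_left embed_ne_wordBlur
    exact mem_of_superset (h _ hya) fun z hz => mem_ZH_iff.2 (Or.inr ⟨a, ha, hz⟩)

lemma le_nhds_wordBlur_iff :
    f ≤ 𝓝 (wordBlur α H) ↔ ∀ F ⊆ H.1, F.Finite → ZH A V α H F ∈ f := by
  refine ⟨fun h F hFH hF => h ((isOpen_ZH hFH hF).mem_nhds (mem_ZH_iff.2 (Or.inl rfl))),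
    fun h => ?_⟩
  have hZ : ∀ β, wordBlur α H ∈ Z A V β → Z A V β ∈ f := fun β hβ =>
    mem_of_superset (h ∅ (empty_subset _) finite_empty) fun z hz =>
      Z_subset_Z_of_prefix (wordBlur_mem_Z_iff.1 hβ) hz.1
  refine TopologicalSpace.tendsto_nhds_generateFrom_iff.2 ?_
  rintro _ (⟨β, rfl⟩ | ⟨β, G, F, hFG, hF, rfl⟩) hmem
  · exact hZ β hmem
  · rcases mem_ZH_iff.1 hmem with heq | ⟨a, ha, hβa⟩
    · obtain ⟨rfl, rfl⟩ := wordBlur_inj.1 heq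
      exact h F hFG hF
    · exact mem_of_superset (hZ _ hβa) fun z hz => mem_ZH_iff.2 (Or.inr ⟨a, ha, hz⟩)

lemma isClosed_sigmaOf (hΛ : IsClosed[prodDiscrete A] Λ) : IsClosed (SigmaOf A V Λ) := by
  refine isClosed_iff_ultrafilter.2 fun x 𝒰 hx hmem => ?_
  rcases exists_eq_embed_or_eq_wordBlur x with ⟨y, rfl⟩ | ⟨α, H, rfl⟩
  · refine Or.inl ⟨y, mem_of_isClosed_of_forall_inLang hΛ fun n => ?_, rfl⟩
    have hZ := le_nhds_embed_iff.1 hx _ (embed_mem_Z_map_range y n)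
    obtain ⟨z, hzΛ, hz⟩ := 𝒰.nonempty_of_mem (inter_mem hmem hZ)
    exact inLang_of_mem_sigmaOf hzΛ hz
  · rw [wordBlur_mem_sigmaOf_iff]
    intro hfin
    have hZH := le_nhds_wordBlur_iff.1 hx (Fol Λ α ∩ H.1) inter_subset_right hfin
    obtain ⟨z, hzΛ, hz⟩ := 𝒰.nonempty_of_mem (inter_mem hmem hZH)
    rcases mem_ZH_iff.1 hz with rfl | ⟨a, ⟨haH, ha⟩, hza⟩
    · exact wordBlur_mem_sigmaOf_iff.1 hzΛ hfin
    · exact ha ⟨inLang_of_mem_sigmaOf hzΛ hza, haH⟩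

/-- The family of cylinders refining `Z(α)` that covers the part of `Σ_Λ` inside `Z(α)`: one `Z(αa)`
for each letter `a` of `Λ` outside `⋃ V_Λ`, and one `Z(α, H, ∅)` for each `H ∈ V_Λ`. -/
def extensionCylinder (V : Set (Set A)) (Λ : Set (ℕ → A)) (α : List A) :
    ↥(letters Λ \ ⋃₀ VLam A V Λ) ⊕ ↥(VLam A V Λ) → Set (FullBlur A V) :=
  Sum.elim (fun a => Z A V (α ++ [a.1])) fun H => ZH A V α ⟨H, H.2.1⟩ ∅

lemma isOpen_extensionCylinder (α : List A) (i) : IsOpen (extensionCylinder V Λ α i) := by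
  rcases i with a | H
  · exact isOpen_Z _
  · exact isOpen_ZH (empty_subset _) finite_empty

lemma sigmaOf_inter_Z_subset_iUnion_extensionCylinder (α : List A) :
    SigmaOf A V Λ ∩ Z A V α ⊆ ⋃ i, extensionCylinder V Λ α i := by
  rintro x ⟨hxΛ, hxα⟩
  rw [mem_iUnion]
  rcases exists_mem_Z_append_or_eq_wordBlur hxα with ⟨a, hxa⟩ | ⟨H, rfl⟩
  · have ha : a ∈ letters Λ := fol_subset_letters Λ α (inLang_of_mem_sigmaOf hxΛ hxa)
    by_cases hcov : a ∈ ⋃₀ VLam A V Λ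
    · obtain ⟨H, hH, haH⟩ := hcov
      exact ⟨Sum.inr ⟨H, hH⟩, mem_ZH_iff.2 (Or.inr ⟨a, ⟨haH, notMem_empty a⟩, hxa⟩)⟩
    · exact ⟨Sum.inl ⟨a, ha, hcov⟩, hxa⟩
  · have hH : H.1 ∈ VLam A V Λ := ⟨H.2, (wordBlur_mem_sigmaOf_iff.1 hxΛ).mono
      (inter_subset_inter_left _ (fol_subset_letters Λ α))⟩
    exact ⟨Sum.inr ⟨H, hH⟩, mem_ZH_iff.2 (Or.inl rfl)⟩

lemma exists_forall_mem_extensionCylinder_nil_eq (hΛ : MapsTo (shiftSeq A) Λ Λ) (i) :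
    ∃ x ∈ SigmaOf A V Λ, ∀ j, x ∈ extensionCylinder V Λ [] j → j = i := by
  rcases i with ⟨a, ha, hcov⟩ | ⟨H, hH⟩
  · obtain ⟨y, hy, rfl⟩ := exists_apply_zero_eq_of_mem_letters hΛ ha
    refine ⟨embed A V y, Or.inl ⟨y, hy, rfl⟩, ?_⟩
    have hy0 : ∀ b, embed A V y ∈ Z A V [b] → y 0 = b := fun b hb =>
      Sum.inl_injective (hb ⟨0, Nat.one_pos⟩)
    rintro (⟨b, hb⟩ | ⟨G, hG⟩) hj
    · exact congrArg Sum.inl (Subtype.ext (hy0 b hj).symm)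
    · obtain ⟨b, ⟨hbG, -⟩, hb⟩ := (mem_ZH_iff.1 hj).resolve_left embed_ne_wordBlur
      exact absurd ⟨G, hG, hy0 b hb ▸ hbG⟩ hcov
  · refine ⟨wordBlur [] ⟨H, hH.1⟩, wordBlur_mem_sigmaOf_iff.2 ?_, ?_⟩
    · simpa only [fol_nil hΛ] using hH.2
    have hZ : ∀ b, wordBlur [] ⟨H, hH.1⟩ ∉ Z A V [b] := fun b hb => by
      simpa using wordBlur_mem_Z_iff.1 hb
    rintro (⟨b, hb⟩ | ⟨G, hG⟩) hj
    · exact absurd hj (hZ b)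
    · have heq := (mem_ZH_iff.1 hj).resolve_right fun ⟨b, _, hb⟩ => hZ b hb
      exact congrArg Sum.inr (Subtype.ext (Subtype.mk.inj (wordBlur_inj.1 heq).2).symm)

lemma finite_of_isCompact_sigmaOf (hΛ : MapsTo (shiftSeq A) Λ Λ)
    (hK : IsCompact (SigmaOf A V Λ)) :
    (VLam A V Λ).Finite ∧ (letters Λ \ ⋃₀ VLam A V Λ).Finite := by
  have hcover : SigmaOf A V Λ ⊆ ⋃ i, extensionCylinder V Λ [] i := fun x hx =>
    sigmaOf_inter_Z_subset_iUnion_extensionCylinder [] ⟨hx, mem_Z_nil x⟩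
  have hfin := finite_of_isCompact_of_irredundant_cover hK (isOpen_extensionCylinder []) hcover
    (exists_forall_mem_extensionCylinder_nil_eq hΛ)
  exact ⟨Finite.sum_right ↥(letters Λ \ ⋃₀ VLam A V Λ), Finite.sum_left ↥(VLam A V Λ)⟩

lemma le_nhds_wordBlur_of_forall_Z_append_notMem (hH : ZH A V α H ∅ ∈ 𝒰)
    (hmax : ∀ a, Z A V (α ++ [a]) ∉ 𝒰) : (𝒰 : Filter (FullBlur A V)) ≤ 𝓝 (wordBlur α H) := by
  refine le_nhds_wordBlur_iff.2 fun F _ hF => ?_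
  have hsplit := mem_of_superset hH (ZH_empty_subset_union F)
  rw [Ultrafilter.mem_coe, Ultrafilter.union_mem_iff, Ultrafilter.finite_biUnion_mem_iff hF]
    at hsplit
  exact hsplit.resolve_right fun ⟨a, _, ha⟩ => hmax a ha

lemma exists_le_nhds_embed_of_forall_exists_Z_append_mem
    (hext : ∀ α, Z A V α ∈ f → ∃ a, Z A V (α ++ [a]) ∈ f) : ∃ y, f ≤ 𝓝 (embed A V y) := by
  obtain ⟨y, hy⟩ := exists_seq_forall_map_range (univ_mem' mem_Z_nil) hext
  refine ⟨y, le_nhds_embed_iff.2 fun α hα => ?_⟩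
  exact embed_mem_Z_iff.1 hα ▸ hy α.length

lemma exists_le_nhds_of_sigmaOf_mem (hfin : (VLam A V Λ).Finite)
    (hcov : (letters Λ \ ⋃₀ VLam A V Λ).Finite) (hmem : SigmaOf A V Λ ∈ 𝒰) :
    ∃ x, (𝒰 : Filter (FullBlur A V)) ≤ 𝓝 x := by
  by_cases hext : ∀ α, Z A V α ∈ 𝒰 → ∃ a, Z A V (α ++ [a]) ∈ 𝒰
  · obtain ⟨y, hy⟩ := exists_le_nhds_embed_of_forall_exists_Z_append_mem hext
    exact ⟨_, hy⟩
  · push Not at hext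
    obtain ⟨α, hα, hmax⟩ := hext
    have := hfin.to_subtype
    have := hcov.to_subtype
    have hunion : ⋃ i, extensionCylinder V Λ α i ∈ 𝒰 :=
      mem_of_superset (inter_mem hmem hα) (sigmaOf_inter_Z_subset_iUnion_extensionCylinder α)
    rw [← biUnion_univ, Ultrafilter.finite_biUnion_mem_iff finite_univ] at hunion
    obtain ⟨a | H, -, hi⟩ := hunion
    · exact absurd hi (hmax a)
    · exact ⟨_, le_nhds_wordBlur_of_forall_Z_append_notMem hi hmax⟩

lemma isCompact_sigmaOf_of_finite (hΛ : IsClosed[prodDiscrete A] Λ) (hfin : (VLam A V Λ).Finite)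
    (hcov : (letters Λ \ ⋃₀ VLam A V Λ).Finite) : IsCompact (SigmaOf A V Λ) := by
  refine isCompact_iff_ultrafilter_le_nhds.2 fun 𝒰 h𝒰 => ?_
  have hmem : SigmaOf A V Λ ∈ 𝒰 := le_principal_iff.1 h𝒰
  obtain ⟨x, hx⟩ := exists_le_nhds_of_sigmaOf_mem hfin hcov hmem
  exact ⟨x, isClosed_iff_ultrafilter.1 (isClosed_sigmaOf hΛ) x 𝒰 hx hmem, hx⟩

end Topology

theorem isCompact_sigmaOf_iff_general {A : Type*} (V : Set (Set A)) (Λ : Set (ℕ → A))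
    (hΛ : IsShiftSpace Λ) :
    @IsCompact _ (tau A V) (SigmaOf A V Λ) ↔
      (VLam A V Λ).Finite ∧ (letters Λ \ ⋃₀ VLam A V Λ).Finite :=
  ⟨finite_of_isCompact_sigmaOf hΛ.2, fun h => isCompact_sigmaOf_of_finite hΛ.1 h.1 h.2⟩

/-- A blur shift space `Σ_Λ` is compact if and only if `V_Λ` is a
finite family that covers all but finitely many elements of `B₁(Λ)`. -/
theorem isCompact_sigmaOf_iff {A : Type*} (V : Set (Set A))
    (hV : IsBlurFamily V) (Λ : Set (ℕ → A)) (hΛ : IsShiftSpace Λ) :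
    @IsCompact _ (tau A V) (SigmaOf A V Λ) ↔
      (VLam A V Λ).Finite ∧ (letters Λ \ ⋃₀ VLam A V Λ).Finite :=
  isCompact_sigmaOf_iff_general V Λ hΛ

end BlurPaper
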